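/- Let s be the smallest nonnegative integer such that t divides m + s, and assume t ≤ m. Then for all nonnegative integers α, β, γ there exists an (α(p^t - 1) + β(p^s - 1), β·p^s + γ·(p^t-1)/(p-1))-spread of t-multisubspaces of F_p^m. -/

import Mathlib

noncomputable def spanCount {K : Type} [Field K] {m t : ℕ} (T : Fin t → Fin m → K)
    (u : Fin m → K) : ℕ :=
  Nat.card {a : Fin t → K // ∑ j, a j • T j = u}

def IsMultispread {K : Type} [Field K] [DecidableEq K] {m t n : ℕ}
    (T : Fin n → Fin t → Fin m → K) (lam mu : ℕ) : Prop :=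
  ∀ u : Fin m → K, (∑ i, spanCount (T i) u) = if u = 0 then n + lam else mu

/-!
For a bilinear map `B : U × W → M` such that every `B(·, w)` with `w ≠ 0` is bijective, the maps
`B(u, ·)`, with `u` running over one representative of each point of `ℙ(U)`, cover a nonzero vector
of `M` once for each point of `ℙ(W)`: up to a common rescaling, `w` determines `u`. Scalar
multiplication `L × L^k → L^k` of an extension `L` of `K` of degree `t` gives the spread of
`K^(m+s) ≃ L^k` by `L`-lines, whose quotient by an `s`-dimensional subspace is a
`(q^s - 1, q^s)`-spread of `K^m`. Multiplication in the extension of degree `m`, with one factor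
restricted to a `t`-dimensional subspace, gives the `(0, (q^t - 1)/(q - 1))`-spread. A zero map is a
`(q^t - 1, 0)`-spread, and unions of spreads give the remaining parameters.
-/

open Module
open scoped LinearAlgebra.Projectivization

section CoverCount

variable {ι V M : Type*}

/-- The number of pairs `(i, v)` with `f i v = u`: the multiplicity with which the images of the
members of `f`, taken as multisets, cover `u`. -/
noncomputable def coverCount (f : ι → V → M) (u : M) : ℕ :=
  Nat.card {x : ι × V // f x.1 x.2 = u}

theorem coverCount_eq_sum [Fintype ι] [Finite V] (f : ι → V → M) (u : M) :
    coverCount f u = ∑ i, Nat.card {v // f i v = u} := by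
  rw [coverCount, ← Nat.card_sigma]
  exact Nat.card_congr (Equiv.subtypeProdEquivSigmaSubtype fun i v => f i v = u)

theorem coverCount_comp {N : Type*} [Finite ι] [Finite V] (f : ι → V → M) (π : M → N) (y : N)
    [Fintype {u // π u = y}] :
    coverCount (fun i v => π (f i v)) y = ∑ u : {u // π u = y}, coverCount f u := by
  simp only [coverCount]
  rw [← Nat.card_sigma]
  exact (Nat.card_congr <|
    Equiv.sigmaSubtypeFiberEquivSubtype (q := fun u => π u = y)
      (fun x : ι × V => f x.1 x.2) fun _ => Iff.rfl).symm

theorem coverCount_zero_of_forall_eq_zero_iff [Zero V] [Zero M] {f : ι → V → M}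
    (hf : ∀ i v, f i v = 0 ↔ v = 0) : coverCount f 0 = Nat.card ι := by
  simp only [coverCount, hf]
  exact Nat.card_congr <| (Equiv.subtypeProdEquivSigmaSubtype fun (_ : ι) (v : V) => v = 0).trans
    (Equiv.sigmaUnique ι fun _ => {v : V // v = 0})

end CoverCount

/-- The coordinate-free form of `IsMultispread`: each multisubspace is the image, as a multiset, of
a linear map `f i`. The zero vector of the source is not part of the nontrivial part, so that the
maps together cover `0` trivially `Nat.card ι` times. -/
def IsMultispreadFamily {R ι V M : Type*} [Semiring R] [AddCommMonoid V] [Module R V]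
    [AddCommMonoid M] [Module R M] (f : ι → V →ₗ[R] M) (lam mu : ℕ) : Prop :=
  coverCount (fun i => f i) 0 = Nat.card ι + lam ∧ ∀ u ≠ 0, coverCount (fun i => f i) u = mu

theorem isMultispreadFamily_zero (R V M : Type*) [Semiring R] [AddCommMonoid V] [Module R V]
    [Finite V] [AddCommMonoid M] [Module R M] :
    IsMultispreadFamily (fun _ : Unit => (0 : V →ₗ[R] M)) (Nat.card V - 1) 0 := by
  have card_pos : 0 < Nat.card V := Nat.card_pos
  refine ⟨?_, fun u hu => ?_⟩
  · have card_eq : Nat.card {_v : V // True} = Nat.card V :=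
      Nat.card_congr (Equiv.subtypeUnivEquiv fun _ => trivial)
    simp only [coverCount_eq_sum, LinearMap.zero_apply, Finset.univ_unique, Finset.sum_singleton,
      Nat.card_unique, card_eq]
    lia
  · simp [coverCount_eq_sum, hu.symm]

theorem IsMultispreadFamily.comp_surjective {R ι V M N : Type*} [Ring R] [Finite ι]
    [AddCommMonoid V] [Module R V] [Finite V] [AddCommGroup M] [Module R M] [AddCommGroup N]
    [Module R N] {f : ι → V →ₗ[R] M} {lam mu : ℕ} (hf : IsMultispreadFamily f lam mu)
    {π : M →ₗ[R] N} (hπ : Function.Surjective π) [Finite π.ker] :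
    IsMultispreadFamily (fun i => π ∘ₗ f i) (lam + (Nat.card π.ker - 1) * mu)
      (Nat.card π.ker * mu) := by
  classical
  have fiberEquivKer (y : N) : {u // π u = y} ≃ π.ker :=
    AddMonoidHom.fiberEquivKerOfSurjective (f := π.toAddMonoidHom) hπ y
  have (y : N) : Finite {u // π u = y} := .of_equiv _ (fiberEquivKer y).symm
  have (y : N) : Fintype {u // π u = y} := .ofFinite _
  have card_fiber (y : N) : Fintype.card {u // π u = y} = Nat.card π.ker := by
    rw [Fintype.card_eq_nat_card, Nat.card_congr (fiberEquivKer y)]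
  refine ⟨?_, fun y hy => ?_⟩
  · let zero_fiber : {u // π u = 0} := ⟨0, map_zero π⟩
    calc coverCount (fun i v => π (f i v)) 0
        = ∑ u : {u // π u = 0}, coverCount (fun i => f i) u := coverCount_comp (fun i => f i) π 0
      _ = coverCount (fun i => f i) 0 + ∑ u ∈ {zero_fiber}ᶜ, coverCount (fun i => f i) u :=
        Fintype.sum_eq_add_sum_compl zero_fiber fun u => coverCount (fun i => f i) u
      _ = Nat.card ι + lam + ∑ _u ∈ {zero_fiber}ᶜ, mu := by
        rw [hf.1]
        congr 1
        refine Finset.sum_congr rfl fun u hu => hf.2 u fun h => ?_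
        exact Finset.mem_compl.1 hu (Finset.mem_singleton.2 (Subtype.ext h))
      _ = Nat.card ι + (lam + (Nat.card π.ker - 1) * mu) := by
        rw [Finset.sum_const, Finset.card_compl, card_fiber, Finset.card_singleton, smul_eq_mul,
          add_assoc]
  · have fiber_ne_zero (u : {u // π u = y}) : (u : M) ≠ 0 := fun h => hy (by simp [← u.2, h])
    calc coverCount (fun i v => π (f i v)) y
        = ∑ u : {u // π u = y}, coverCount (fun i => f i) u := coverCount_comp (fun i => f i) π y
      _ = ∑ _u : {u // π u = y}, mu := Fintype.sum_congr _ _ fun u => hf.2 u (fiber_ne_zero u)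
      _ = Nat.card π.ker * mu := by
        rw [Finset.sum_const, Finset.card_univ, card_fiber, smul_eq_mul]

section Projective

variable {F U W M : Type*} [Field F] [AddCommGroup U] [Module F U] [AddCommGroup W] [Module F W]
  [AddCommGroup M] [Module F M]

theorem coverCount_projectivization_rep (B : U →ₗ[F] W →ₗ[F] M)
    (hB : ∀ w ≠ 0, Function.Bijective (B.flip w)) {u : M} (hu : u ≠ 0) :
    coverCount (fun x : ℙ F U => B x.rep) u = Nat.card (ℙ F W) := by
  have right_ne_zero (x : {x : ℙ F U × W // B x.1.rep x.2 = u}) : x.1.2 ≠ 0 :=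
    fun h => hu (by rw [← x.2, h, map_zero])
  refine Nat.card_congr (Equiv.ofBijective
    (fun x => Projectivization.mk F x.1.2 (right_ne_zero x)) ⟨?_, ?_⟩)
  · rintro ⟨⟨x, v⟩, hv⟩ ⟨⟨y, w⟩, hw⟩ hvw
    have w_ne_zero : w ≠ 0 := right_ne_zero ⟨(y, w), hw⟩
    obtain ⟨c, rfl⟩ := (Projectivization.mk_eq_mk_iff' ..).1 hvw
    have rep_eq : c • x.rep = y.rep := (hB w w_ne_zero).1 (by simpa using hv.trans hw.symm)
    obtain rfl : y = x := by
      rw [← y.mk_rep, ← x.mk_rep, Projectivization.mk_eq_mk_iff']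
      exact ⟨c, rep_eq⟩
    obtain rfl : c = 1 := smul_left_injective F y.rep_nonzero (by simpa using rep_eq)
    simp
  · intro P
    induction P using Projectivization.ind with | h w hw =>
    obtain ⟨v, rfl : B v w = u⟩ := (hB w hw).2 u
    have hv : v ≠ 0 := by rintro rfl; simp at hu
    obtain ⟨c, hc⟩ := Projectivization.exists_smul_eq_mk_rep F v hv
    refine ⟨⟨(.mk F v hv, c⁻¹ • w), ?_⟩, (Projectivization.mk_eq_mk_iff ..).2 ⟨c⁻¹, rfl⟩⟩
    simp [← hc, Units.smul_def]

theorem isMultispreadFamily_projectivization_rep (B : U →ₗ[F] W →ₗ[F] M)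
    (hB : ∀ w ≠ 0, Function.Bijective (B.flip w)) :
    IsMultispreadFamily (fun x : ℙ F U => B x.rep) 0 (Nat.card (ℙ F W)) := by
  refine ⟨coverCount_zero_of_forall_eq_zero_iff fun x w => ⟨fun h => ?_, fun h => by simp [h]⟩,
    fun u hu => coverCount_projectivization_rep B hB hu⟩
  by_contra hw
  exact x.rep_nonzero ((hB w hw).1 (by simpa using h))

theorem isMultispreadFamily_toSpanSingleton_rep [Finite F] :
    IsMultispreadFamily (fun x : ℙ F M => LinearMap.toSpanSingleton F M x.rep) 0 1 := by
  have smul_bijective (a : F) (ha : a ≠ 0) :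
      Function.Bijective ((LinearMap.lsmul F M).flip.flip a) :=
    (LinearEquiv.smulOfNeZero F M a ha).bijective
  have card_line : Nat.card (ℙ F F) = 1 := by
    simp [Projectivization.card_of_finrank F F (finrank_self F)]
  rw [← card_line]
  exact isMultispreadFamily_projectivization_rep (LinearMap.lsmul F M).flip smul_bijective

theorem isMultispreadFamily_mulLeft_rep {L : Type*} [Field L] [Algebra F L] (S : Submodule F L) :
    IsMultispreadFamily (fun x : ℙ F L => LinearMap.mulLeft F x.rep ∘ₗ S.subtype) 0
      (Nat.card (ℙ F S)) :=
  isMultispreadFamily_projectivization_rep ((LinearMap.mul F L).compl₂ S.subtype) fun w hw =>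
    mulRight_bijective₀ (w : L) (by simpa using hw)

end Projective

theorem exists_field_extension_finrank_eq (K : Type*) [Field K] [Finite K] {d : ℕ} (hd : 0 < d) :
    ∃ (L : Type) (_ : Field L) (_ : Algebra K L), finrank K L = d := by
  obtain ⟨p, _⟩ := CharP.exists K
  have : Fact p.Prime := ⟨CharP.char_is_prime K p⟩
  have : NeZero d := ⟨hd.ne'⟩
  exact ⟨FiniteField.Extension K p d, inferInstance, inferInstance,
    FiniteField.finrank_extension K p d⟩

theorem exists_submodule_finrank_eq {F M : Type*} [DivisionRing F] [AddCommGroup M] [Module F M]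
    {d : ℕ} (hd : d ≤ finrank F M) : ∃ S : Submodule F M, finrank F S = d := by
  obtain ⟨v, hv⟩ := exists_linearIndependent_of_le_finrank hd
  exact ⟨Submodule.span F (Set.range v), by simpa using finrank_span_eq_card hv⟩

theorem spanCount_apply_basis {K : Type} [Field K] {V : Type*} [AddCommGroup V] [Module K V]
    {m t : ℕ} (b : Basis (Fin t) K V) (g : V →ₗ[K] Fin m → K) (u : Fin m → K) :
    spanCount (fun j => g (b j)) u = Nat.card {v // g v = u} := by
  refine Nat.card_congr (b.equivFun.symm.toEquiv.subtypeEquiv fun a => ?_)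
  simp [Basis.equivFun_symm_apply]

section Existence

variable (K : Type) [Field K] [DecidableEq K]

/-- The pairs `(lam, mu)` for which `K^m` has a `(lam, mu)`-spread of `t`-multisubspaces. The union
of two spreads makes them a submonoid. -/
def multispreadParams (m t : ℕ) : AddSubmonoid (ℕ × ℕ) where
  carrier := {x | ∃ (n : ℕ) (T : Fin n → Fin t → Fin m → K), IsMultispread T x.1 x.2}
  zero_mem' := ⟨0, Fin.elim0, fun u => by simp⟩
  add_mem' := by
    rintro _ _ ⟨n₁, T₁, h₁⟩ ⟨n₂, T₂, h₂⟩
    refine ⟨n₁ + n₂, Fin.append T₁ T₂, fun u => ?_⟩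
    simp only [Fin.sum_univ_add, Fin.append_left, Fin.append_right, h₁ u, h₂ u, Prod.fst_add,
      Prod.snd_add]
    split_ifs <;> ring

variable {K}

theorem IsMultispreadFamily.mem_multispreadParams {ι V M : Type*} [Finite ι] [AddCommGroup V]
    [Module K V] [Finite V] [AddCommGroup M] [Module K M] [Module.Finite K M]
    {f : ι → V →ₗ[K] M} {lam mu : ℕ} (hf : IsMultispreadFamily f lam mu) :
    (lam, mu) ∈ multispreadParams K (finrank K M) (finrank K V) := by
  cases nonempty_fintype ι
  let index : Fin (Fintype.card ι) ≃ ι := (Fintype.equivFin ι).symm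
  let coords : M ≃ₗ[K] (Fin (finrank K M) → K) := (finBasis K M).equivFun
  refine ⟨Fintype.card ι, fun i j => coords (f (index i) (finBasis K V j)), fun u => ?_⟩
  have sum_spanCount : ∑ i, spanCount (fun j => coords (f (index i) (finBasis K V j))) u =
      coverCount (fun i => f i) (coords.symm u) := by
    rw [coverCount_eq_sum, ← index.sum_comp]
    simp only [LinearEquiv.eq_symm_apply]
    exact Fintype.sum_congr _ _ fun i =>
      spanCount_apply_basis (finBasis K V) (coords.toLinearMap ∘ₗ f (index i)) u
  rw [sum_spanCount]
  split_ifs with hu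
  · rw [hu, map_zero, hf.1, Nat.card_eq_fintype_card]
  · exact hf.2 _ (by simpa using hu)

variable [Finite K]

theorem trivial_mem_multispreadParams (m t : ℕ) :
    (Nat.card K ^ t - 1, 0) ∈ multispreadParams K m t := by
  simpa [Nat.card_fun] using
    (isMultispreadFamily_zero K (Fin t → K) (Fin m → K)).mem_multispreadParams

theorem field_spread_quotient_mem_multispreadParams {m t s : ℕ} (ht : 0 < t) (hs : t ∣ m + s) :
    (Nat.card K ^ s - 1, Nat.card K ^ s) ∈ multispreadParams K m t := by
  obtain ⟨L, _, _, finrank_L⟩ := exists_field_extension_finrank_eq K ht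
  have : Module.Finite K L := finite_of_finrank_pos (finrank_L ▸ ht)
  have : Finite L := Module.finite_of_finite K
  obtain ⟨k, hk⟩ := hs
  have finrank_M : finrank K (Fin k → L) = m + s := by
    simp [finrank_pi_fintype, finrank_L, hk, mul_comm]
  obtain ⟨S, finrank_S⟩ :=
    exists_submodule_finrank_eq (F := K) (M := Fin k → L) (d := s) (by lia)
  have finrank_quotient : finrank K ((Fin k → L) ⧸ S) = m := by
    have := S.finrank_quotient_add_finrank
    lia
  -- The cover counts do not involve the scalars, so a family over `L` is one over `K`.
  have lines : IsMultispreadFamily (fun x : ℙ L (Fin k → L) =>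
      (LinearMap.toSpanSingleton L (Fin k → L) x.rep).restrictScalars K) 0 1 :=
    isMultispreadFamily_toSpanSingleton_rep (F := L) (M := Fin k → L)
  have projection := (lines.comp_surjective S.mkQ_surjective).mem_multispreadParams
  rw [finrank_quotient, finrank_L, S.ker_mkQ, natCard_eq_pow_finrank (K := K) (V := S),
    finrank_S] at projection
  simpa using projection

theorem subspaces_mem_multispreadParams {m t : ℕ} (ht : 0 < t) (htm : t ≤ m) :
    (0, (Nat.card K ^ t - 1) / (Nat.card K - 1)) ∈ multispreadParams K m t := by
  obtain ⟨L, _, _, finrank_L⟩ := exists_field_extension_finrank_eq K (ht.trans_le htm)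
  have : Module.Finite K L := finite_of_finrank_pos (by lia)
  have : Finite L := Module.finite_of_finite K
  obtain ⟨S, finrank_S⟩ := exists_submodule_finrank_eq (htm.trans_eq finrank_L.symm)
  have multiples := (isMultispreadFamily_mulLeft_rep S).mem_multispreadParams
  rwa [Projectivization.card'', natCard_eq_pow_finrank (K := K) (V := S), finrank_S,
    finrank_L] at multiples

end Existence

theorem stmt_11_general (p t m s a b c : ℕ) (K : Type) [Field K] [Fintype K] [DecidableEq K]
    (hK : Fintype.card K = p) (ht : 0 < t) (htm : t ≤ m) (hs : t ∣ m + s) :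
    ∃ (n : ℕ) (T : Fin n → Fin t → Fin m → K),
      IsMultispread T (a * (p ^ t - 1) + b * (p ^ s - 1))
        (b * p ^ s + c * ((p ^ t - 1) / (p - 1))) := by
  obtain rfl : Nat.card K = p := Nat.card_eq_fintype_card.trans hK
  have union := add_mem
    (add_mem (nsmul_mem (trivial_mem_multispreadParams (K := K) m t) a)
      (nsmul_mem (field_spread_quotient_mem_multispreadParams ht hs) b))
    (nsmul_mem (subspaces_mem_multispreadParams ht htm) c)
  simpa [multispreadParams] using union

/-- If s is minimal with t ∣ m+s and t ≤ m, then for all α, β, γ ≥ 0 there is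
    an (α(p^t-1)+β(p^s-1), β p^s + γ(p^t-1)/(p-1))-spread of t-multisubspaces
    of F_p^m. -/
theorem stmt_11 (p t m s a b c : ℕ) (K : Type) [Field K] [Fintype K]
    [DecidableEq K] (hK : Fintype.card K = p)
    (ht : 0 < t) (htm : t ≤ m)
    (hs : t ∣ m + s) (hmin : ∀ s' : ℕ, s' < s → ¬ t ∣ m + s') :
    ∃ (n : ℕ) (T : Fin n → Fin t → Fin m → K),
      IsMultispread T (a * (p ^ t - 1) + b * (p ^ s - 1))
        (b * p ^ s + c * ((p ^ t - 1) / (p - 1))) :=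
  stmt_11_general p t m s a b c K hK ht htm hs
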